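/- arXiv:1601.04749 — 5 statements merged into one kernel-verified Lean document; each statement's English description precedes it below -/
import Mathlib

section
/- For every choice of backlogged set B, server rates ρ_k ≥ 0, eligibility matrix Π (with every row and column containing a 1) and positive weights φ_i, there exists at least one CM4-fair rate allocation matrix. -/
open Finset

/-- A rate allocation matrix: nonnegative, zero for non-backlogged users,
zero for ineligible pairs, and work-conserving at each server. -/
def IsRateAlloc {N K : ℕ} (B : Set (Fin N)) (π : Fin N → Fin K → Bool)
    (ρ : Fin K → ℝ) (R : Fin N → Fin K → ℝ) : Prop :=
  (∀ i k, 0 ≤ R i k) ∧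
  (∀ i k, i ∉ B → R i k = 0) ∧
  (∀ i k, π i k = false → R i k = 0) ∧
  (∀ k, (∃ i ∈ B, π i k = true) → ∑ i, R i k = ρ k)

/-- Total service rate of user `i`. -/
noncomputable def totalRate {N K : ℕ} (R : Fin N → Fin K → ℝ) (i : Fin N) : ℝ :=
  ∑ k, R i k

/-- Constrained multi-user multi-server max-min (CM4) fairness. -/
def CM4Fair {N K : ℕ} (B : Set (Fin N)) (π : Fin N → Fin K → Bool)
    (ρ : Fin K → ℝ) (φ : Fin N → ℝ) (R : Fin N → Fin K → ℝ) : Prop :=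
  IsRateAlloc B π ρ R ∧
  ∀ R' : Fin N → Fin K → ℝ, IsRateAlloc B π ρ R' →
    ∀ i, totalRate R i / φ i < totalRate R' i / φ i →
      ∃ j, totalRate R j / φ j ≤ totalRate R i / φ i ∧
        totalRate R' j / φ j < totalRate R j / φ j

/-!
Minimize the energy `∑ i, r i ^ 2 / φ i` of the total rates over the compact set of rate
allocations. If a user `a` served at `k` had a larger normalized rate than another backlogged user
`b` eligible at `k`, moving a little of the rate of `k` from `a` to `b` would lower the energy.
Hence at a minimizer every server serves only those users, among the ones it may serve, whose
normalized rate is smallest.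

Such an allocation `R` is fair: let `S` be the set of users with normalized rate at most that of
`i`. A server able to serve a member of `S` spends its whole rate on `S`, so `R` already maximizes
the sum of the total rates over `S`, and no allocation can raise `i` without lowering some member
of `S`.
-/

section WeightedEnergy

variable {ι 𝕜 : Type*} [Fintype ι] [Field 𝕜]

/-- The quadratic energy of a vector `x` with weights `φ`. Its partial derivatives are twice the
normalized coordinates `x i / φ i`, so shifting mass from a larger to a smaller normalized
coordinate decreases it. -/
def weightedEnergy (φ x : ι → 𝕜) : 𝕜 :=
  ∑ i, x i ^ 2 / φ i

variable [DecidableEq ι] {φ x : ι → 𝕜} {a b : ι}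

theorem weightedEnergy_add_single_sub_single (hab : a ≠ b) (t : 𝕜) :
    weightedEnergy φ (x + Pi.single b t - Pi.single a t) =
      weightedEnergy φ x + t * (t * (1 / φ a + 1 / φ b) - 2 * (x a / φ a - x b / φ b)) := by
  rw [← sub_eq_iff_eq_add', weightedEnergy, weightedEnergy, ← sum_sub_distrib,
    Fintype.sum_eq_add a b hab]
  · simp only [Pi.add_apply, Pi.sub_apply, Pi.single_eq_same, Pi.single_eq_of_ne hab,
      Pi.single_eq_of_ne hab.symm]
    ring
  · rintro i ⟨hia, hib⟩
    simp [hia, hib]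

theorem exists_weightedEnergy_add_single_sub_single_lt [LinearOrder 𝕜] [IsStrictOrderedRing 𝕜]
    (ha : 0 < φ a) (hb : 0 < φ b) (hlt : x b / φ b < x a / φ a) {T : 𝕜} (hT : 0 < T) :
    ∃ t, 0 ≤ t ∧ t ≤ T ∧
      weightedEnergy φ (x + Pi.single b t - Pi.single a t) < weightedEnergy φ x := by
  have hab : a ≠ b := by
    rintro rfl
    exact hlt.false
  set gap := x a / φ a - x b / φ b with hgap
  set curvature := 1 / φ a + 1 / φ b with hcurvature
  have gap_pos : 0 < gap := sub_pos.2 hlt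
  have curvature_pos : 0 < curvature := by positivity
  -- The energy changes by `t * (t * curvature - 2 * gap)`, which is least at `gap / curvature`.
  set t := min T (gap / curvature)
  have t_pos : 0 < t := lt_min hT (div_pos gap_pos curvature_pos)
  have ht : t * curvature ≤ gap := (le_div_iff₀ curvature_pos).1 (min_le_right _ _)
  refine ⟨t, t_pos.le, min_le_left _ _, ?_⟩
  rw [weightedEnergy_add_single_sub_single hab, ← hgap, ← hcurvature]
  exact add_lt_of_neg_right _ (mul_neg_of_pos_of_neg t_pos (by linarith))

end WeightedEnergy

section Transfer

variable {ι κ M : Type*} [DecidableEq ι] [DecidableEq κ]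

theorem single_single_nonneg [Zero M] [Preorder M] (a : ι) (k : κ) {t : M} (ht : 0 ≤ t)
    (i : ι) (l : κ) : 0 ≤ (Pi.single a (Pi.single k t) : ι → κ → M) i l := by
  have row_nonneg : 0 ≤ (Pi.single k t : κ → M) := Pi.single_nonneg.2 ht
  have matrix_nonneg : 0 ≤ (Pi.single a (Pi.single k t) : ι → κ → M) :=
    Pi.single_nonneg.2 row_nonneg
  exact matrix_nonneg i l

variable [AddCommGroup M]

/-- The matrix obtained from `R` by moving the amount `t` in column `k` from row `a` to row `b`: the
server `k` reassigns the rate `t` from user `a` to user `b`. -/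
def transfer (R : ι → κ → M) (a b : ι) (k : κ) (t : M) : ι → κ → M :=
  R + Pi.single b (Pi.single k t) - Pi.single a (Pi.single k t)

theorem sum_row_transfer [Fintype κ] (R : ι → κ → M) (a b : ι) (k : κ) (t : M) :
    (fun i ↦ ∑ l, transfer R a b k t i l) =
      (fun i ↦ ∑ l, R i l) + Pi.single b t - Pi.single a t := by
  have sum_single (c i : ι) :
      ∑ l, (Pi.single c (Pi.single k t) : ι → κ → M) i l = (Pi.single c t : ι → M) i := by
    obtain rfl | hi := eq_or_ne i c <;> simp [*]
  ext i
  simp only [transfer, Pi.add_apply, Pi.sub_apply, sum_add_distrib,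
    sum_sub_distrib, sum_single]

theorem sum_col_transfer [Fintype ι] (R : ι → κ → M) (a b : ι) (k : κ) (t : M) (l : κ) :
    ∑ i, transfer R a b k t i l = ∑ i, R i l := by
  have sum_single (c : ι) :
      ∑ i, (Pi.single c (Pi.single k t) : ι → κ → M) i l = (Pi.single k t : κ → M) l := by
    rw [← Finset.sum_apply, Fintype.sum_pi_single']
  simp only [transfer, Pi.add_apply, Pi.sub_apply, sum_add_distrib,
    sum_sub_distrib, sum_single, add_sub_cancel_right]

variable [PartialOrder M] [IsOrderedAddMonoid M] {R : ι → κ → M} {a b i : ι} {k l : κ} {t : M}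

theorem transfer_nonneg (hR : ∀ i l, 0 ≤ R i l) (ht : 0 ≤ t) (htR : t ≤ R a k) (i : ι) (l : κ) :
    0 ≤ transfer R a b k t i l := by
  have le_entry : (Pi.single a (Pi.single k t) : ι → κ → M) i l ≤ R i l := by
    obtain rfl | hi := eq_or_ne i a
    · obtain rfl | hl := eq_or_ne l k <;> simp [*]
    · simp [*]
  exact sub_nonneg.2 (le_add_of_le_of_nonneg le_entry (single_single_nonneg _ _ ht i l))

theorem transfer_apply_le (ht : 0 ≤ t) (hne : ¬(i = b ∧ l = k)) :
    transfer R a b k t i l ≤ R i l := by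
  have gain_eq_zero : (Pi.single b (Pi.single k t) : ι → κ → M) i l = 0 := by
    obtain rfl | hi := eq_or_ne i b
    · simp [show l ≠ k by simpa using hne]
    · simp [hi]
  simpa [transfer, gain_eq_zero] using single_single_nonneg _ _ ht i l

end Transfer

section RateAlloc

variable {N K : ℕ} {B : Set (Fin N)} {π : Fin N → Fin K → Bool} {ρ : Fin K → ℝ}
  {φ : Fin N → ℝ} {R R' : Fin N → Fin K → ℝ}

/-- User `i` is backlogged and eligible at server `k`, that is, the pair `(i, k)` is one at which a
rate allocation matrix may be nonzero. -/
def CanServe {ι κ : Type*} (B : Set ι) (π : ι → κ → Bool) (i : ι) (k : κ) : Prop :=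
  i ∈ B ∧ π i k = true

/-- Every server serves only those users, among the backlogged users eligible at it, whose
normalized rate is smallest. This is the local form of CM4 fairness. -/
def IsServerFair (B : Set (Fin N)) (π : Fin N → Fin K → Bool) (φ : Fin N → ℝ)
    (R : Fin N → Fin K → ℝ) : Prop :=
  ∀ ⦃a b k⦄, 0 < R a k → CanServe B π b k → totalRate R a / φ a ≤ totalRate R b / φ b

theorem totalRate_transfer (R : Fin N → Fin K → ℝ) (a b : Fin N) (k : Fin K) (t : ℝ) :
    totalRate (transfer R a b k t) = totalRate R + Pi.single b t - Pi.single a t :=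
  sum_row_transfer R a b k t

theorem isRateAlloc_iff :
    IsRateAlloc B π ρ R ↔ (∀ i k, 0 ≤ R i k) ∧ (∀ i k, ¬CanServe B π i k → R i k = 0) ∧
      ∀ i k, CanServe B π i k → ∑ j, R j k = ρ k := by
  constructor
  · rintro ⟨nonneg, eq_zero_of_idle, eq_zero_of_ineligible, sum_eq⟩
    refine ⟨nonneg, fun i k hik ↦ ?_, fun i k hik ↦ sum_eq k ⟨i, hik⟩⟩
    obtain hi | hk := not_and_or.1 hik
    · exact eq_zero_of_idle i k hi
    · exact eq_zero_of_ineligible i k (Bool.eq_false_of_not_eq_true hk)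
  · rintro ⟨nonneg, eq_zero, sum_eq⟩
    refine ⟨nonneg, fun i k hi ↦ eq_zero i k fun hik ↦ hi hik.1,
      fun i k hk ↦ eq_zero i k fun hik ↦ ?_, fun k ⟨i, hik⟩ ↦ sum_eq i k hik⟩
    exact Bool.false_ne_true (hk.symm.trans hik.2)

namespace IsRateAlloc

theorem nonneg (hR : IsRateAlloc B π ρ R) (i : Fin N) (k : Fin K) : 0 ≤ R i k :=
  hR.1 i k

theorem eq_zero_of_not_canServe (hR : IsRateAlloc B π ρ R) {i : Fin N} {k : Fin K}
    (hik : ¬CanServe B π i k) : R i k = 0 :=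
  (isRateAlloc_iff.1 hR).2.1 i k hik

theorem sum_eq_of_canServe (hR : IsRateAlloc B π ρ R) {i : Fin N} {k : Fin K}
    (hik : CanServe B π i k) : ∑ j, R j k = ρ k :=
  (isRateAlloc_iff.1 hR).2.2 i k hik

theorem apply_le_abs (hR : IsRateAlloc B π ρ R) (i : Fin N) (k : Fin K) : R i k ≤ |ρ k| := by
  by_cases hik : CanServe B π i k
  · calc
      R i k ≤ ∑ j, R j k := single_le_sum (fun j _ ↦ hR.nonneg j k) (mem_univ i)
      _ = ρ k := hR.sum_eq_of_canServe hik
      _ ≤ |ρ k| := le_abs_self _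
  · exact (hR.eq_zero_of_not_canServe hik).trans_le (abs_nonneg _)

theorem isRateAlloc_transfer (hR : IsRateAlloc B π ρ R) {a b : Fin N} {k : Fin K}
    (hbk : CanServe B π b k) {t : ℝ} (ht : 0 ≤ t) (htR : t ≤ R a k) :
    IsRateAlloc B π ρ (transfer R a b k t) := by
  have entry_nonneg := transfer_nonneg (b := b) hR.nonneg ht htR
  refine isRateAlloc_iff.2 ⟨entry_nonneg, fun i l hil ↦ ?_, fun i l hil ↦ ?_⟩
  · have hne : ¬(i = b ∧ l = k) := by
      rintro ⟨rfl, rfl⟩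
      exact hil hbk
    exact le_antisymm ((transfer_apply_le ht hne).trans_eq (hR.eq_zero_of_not_canServe hil))
      (entry_nonneg i l)
  · rw [sum_col_transfer, hR.sum_eq_of_canServe hil]

theorem sum_totalRate_le_of_saturated (hR : IsRateAlloc B π ρ R) (hR' : IsRateAlloc B π ρ R')
    {S : Finset (Fin N)}
    (hS : ∀ ⦃a b k⦄, 0 < R a k → b ∈ S → CanServe B π b k → a ∈ S) :
    ∑ i ∈ S, totalRate R' i ≤ ∑ i ∈ S, totalRate R i := by
  -- It suffices to compare, server by server, the rate spent on `S`.
  simp only [totalRate, sum_comm (s := S)]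
  refine sum_le_sum fun k _ ↦ ?_
  by_cases hk : ∃ b ∈ S, CanServe B π b k
  · obtain ⟨b, hbS, hbk⟩ := hk
    have eq_zero_of_notMem : ∀ a ∈ univ, a ∉ S → R a k = 0 := fun a _ haS ↦
      (hR.nonneg a k).eq_of_not_lt' fun ha ↦ haS (hS ha hbS hbk)
    calc
      ∑ i ∈ S, R' i k ≤ ∑ i, R' i k := sum_le_univ_sum_of_nonneg fun i ↦ hR'.nonneg i k
      _ = ∑ i, R i k := by rw [hR'.sum_eq_of_canServe hbk, hR.sum_eq_of_canServe hbk]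
      _ = ∑ i ∈ S, R i k := (sum_subset (subset_univ S) eq_zero_of_notMem).symm
  · push Not at hk
    rw [sum_eq_zero fun i hi ↦ hR'.eq_zero_of_not_canServe (hk i hi)]
    exact sum_nonneg fun i _ ↦ hR.nonneg i k

theorem isServerFair_of_isMinOn (hR : IsRateAlloc B π ρ R) (hφ : ∀ i, 0 < φ i)
    (hmin : IsMinOn (fun R ↦ weightedEnergy φ (totalRate R)) {R | IsRateAlloc B π ρ R} R) :
    IsServerFair B π φ R := by
  intro a b k ha hbk
  by_contra! hlt
  obtain ⟨t, t_nonneg, htR, energy_lt⟩ :=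
    exists_weightedEnergy_add_single_sub_single_lt (hφ a) (hφ b) hlt ha
  rw [← totalRate_transfer] at energy_lt
  exact energy_lt.not_ge (hmin (hR.isRateAlloc_transfer hbk t_nonneg htR))

end IsRateAlloc

theorem IsServerFair.cm4Fair (hfair : IsServerFair B π φ R) (hφ : ∀ i, 0 < φ i)
    (hR : IsRateAlloc B π ρ R) : CM4Fair B π ρ φ R := by
  refine ⟨hR, fun R' hR' i hi ↦ ?_⟩
  by_contra! hle
  set S : Finset (Fin N) := {j | totalRate R j / φ j ≤ totalRate R i / φ i} with hS
  have mem_S {j : Fin N} : j ∈ S ↔ totalRate R j / φ j ≤ totalRate R i / φ i := by simp [hS]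
  have sum_lt : ∑ j ∈ S, totalRate R j < ∑ j ∈ S, totalRate R' j :=
    sum_lt_sum (fun j hj ↦ (div_le_div_iff_of_pos_right (hφ j)).1 (hle j (mem_S.1 hj)))
      ⟨i, mem_S.2 le_rfl, (div_lt_div_iff_of_pos_right (hφ i)).1 hi⟩
  exact sum_lt.not_ge <| hR.sum_totalRate_le_of_saturated hR' fun a b k ha hb hbk ↦
    mem_S.2 ((hfair ha hbk).trans (mem_S.1 hb))

variable (B π) in
theorem nonempty_setOf_isRateAlloc (hρ : ∀ k, 0 ≤ ρ k) : {R | IsRateAlloc B π ρ R}.Nonempty := by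
  classical
  have exists_split (k : Fin K) : ∃ x : Fin N → ℝ, (∀ i, 0 ≤ x i) ∧
      (∀ i, ¬CanServe B π i k → x i = 0) ∧ ∀ i, CanServe B π i k → ∑ j, x j = ρ k := by
    by_cases hk : ∃ b, CanServe B π b k
    · obtain ⟨b, hbk⟩ := hk
      refine ⟨Pi.single b (ρ k), fun i ↦ ?_, fun i hik ↦ ?_, fun _ _ ↦ ?_⟩
      · obtain rfl | hib := eq_or_ne i b <;> simp [*]
      · have hib : i ≠ b := by
          rintro rfl
          exact hik hbk
        exact Pi.single_eq_of_ne hib _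
      · exact Fintype.sum_pi_single' b (ρ k)
    · exact ⟨0, fun _ ↦ le_rfl, fun _ _ ↦ rfl, fun i hik ↦ (hk ⟨i, hik⟩).elim⟩
  choose x nonneg eq_zero sum_eq using exists_split
  exact ⟨fun i k ↦ x k i, isRateAlloc_iff.2
    ⟨fun i k ↦ nonneg k i, fun i k ↦ eq_zero k i, fun i k ↦ sum_eq k i⟩⟩

variable (B π ρ)

theorem isClosed_setOf_isRateAlloc : IsClosed {R | IsRateAlloc B π ρ R} := by
  simp only [isRateAlloc_iff, Set.ofPred_and, Set.ofPred_forall]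
  refine .inter ?_ (.inter ?_ ?_)
  · exact isClosed_iInter fun i ↦ isClosed_iInter fun k ↦
      isClosed_le continuous_const (by fun_prop)
  · exact isClosed_iInter fun i ↦ isClosed_iInter fun k ↦ isClosed_iInter fun _ ↦
      isClosed_eq (by fun_prop) continuous_const
  · exact isClosed_iInter fun i ↦ isClosed_iInter fun k ↦ isClosed_iInter fun _ ↦
      isClosed_eq (by fun_prop) continuous_const

theorem isCompact_setOf_isRateAlloc : IsCompact {R | IsRateAlloc B π ρ R} :=
  isCompact_Icc.of_isClosed_subset (isClosed_setOf_isRateAlloc B π ρ)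
    fun _ hR ↦ ⟨hR.nonneg, hR.apply_le_abs⟩

theorem continuous_weightedEnergy_totalRate (φ : Fin N → ℝ) :
    Continuous fun R : Fin N → Fin K → ℝ ↦ weightedEnergy φ (totalRate R) := by
  unfold weightedEnergy totalRate
  fun_prop

end RateAlloc

/-- Existence: for every backlogged set, server rates, eligibility matrix
(with a `1` in every row and column) and positive weights, there exists a
CM4-fair rate allocation matrix. -/
theorem cm4fair_exists {N K : ℕ} (hN : 0 < N) (hK : 0 < K)
    (B : Set (Fin N)) (π : Fin N → Fin K → Bool) (ρ : Fin K → ℝ) (φ : Fin N → ℝ)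
    (hφ : ∀ i, 0 < φ i) (hρ : ∀ k, 0 ≤ ρ k)
    (hrow : ∀ i, ∃ k, π i k = true) (hcol : ∀ k, ∃ i, π i k = true) :
    ∃ R : Fin N → Fin K → ℝ, CM4Fair B π ρ φ R := by
  obtain ⟨R, hR, hmin⟩ := (isCompact_setOf_isRateAlloc B π ρ).exists_isMinOn
    (nonempty_setOf_isRateAlloc B π hρ) (continuous_weightedEnergy_totalRate φ).continuousOn
  exact ⟨R, (hR.isServerFair_of_isMinOn hφ hmin).cm4Fair hφ hR⟩
end

section
/- Let R be a CM4-fair rate allocation matrix. If i and j are backlogged users that both receive positive service from the same server k (i.e. r_{i,k} > 0 and r_{j,k} > 0), then their normalized total rates are equal: r_i/φ_i = r_j/φ_j. -/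
open Finset

/-!
If `j` had a strictly larger normalized rate than `i`, all the service `j` receives from the shared
server could be moved to `i`. This raises the rate of `i`, and the only user who loses is `j`, whose
normalized rate exceeds that of `i`, contradicting CM4-fairness.
-/

section Transfer

variable {ι κ α : Type*} [DecidableEq ι] [DecidableEq κ] [AddCommGroup α]

/-- The allocation obtained from `R` by moving the amount `ε` of server `k` from user `j` to
user `i`. For `i = j` this is `R` itself. -/
def transferRate (R : ι → κ → α) (j i : ι) (k : κ) (ε : α) : ι → κ → α :=
  R + Pi.single i (Pi.single k ε) - Pi.single j (Pi.single k ε)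

theorem sum_users_transferRate [Fintype ι] (R : ι → κ → α) (j i : ι) (k : κ) (ε : α) (b : κ) :
    ∑ a, transferRate R j i k ε a b = ∑ a, R a b := by
  simp [transferRate, ← Finset.sum_apply, sum_add_distrib]

theorem sum_servers_transferRate [Fintype κ] (R : ι → κ → α) (j i : ι) (k : κ) (ε : α) (a : ι) :
    ∑ b, transferRate R j i k ε a b =
      ∑ b, R a b + (Pi.single i ε : ι → α) a - (Pi.single j ε : ι → α) a := by
  simp [transferRate, Pi.single_apply, ite_apply, sum_add_distrib]

variable [PartialOrder α] [IsOrderedAddMonoid α] {R : ι → κ → α} {j i : ι} {k : κ} {ε : α}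

theorem transferRate_le_of_imp_ne (hε : 0 ≤ ε) {a : ι} {b : κ} (hab : a = i → b ≠ k) :
    transferRate R j i k ε a b ≤ R a b := by
  have hloss : 0 ≤ (Pi.single j (Pi.single k ε) : ι → κ → α) :=
    Pi.single_nonneg.2 (Pi.single_nonneg.2 hε)
  have hgain : (Pi.single i (Pi.single k ε) : ι → κ → α) a b = 0 := by
    rcases eq_or_ne a i with rfl | ha
    · simp [hab rfl]
    · simp [ha]
  simpa [transferRate, hgain] using hloss a b

theorem transferRate_nonneg (hR : ∀ a b, 0 ≤ R a b) (hε : 0 ≤ ε) (hεR : ε ≤ R j k)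
    (a : ι) (b : κ) : 0 ≤ transferRate R j i k ε a b := by
  have hgain : 0 ≤ (Pi.single i (Pi.single k ε) : ι → κ → α) :=
    Pi.single_nonneg.2 (Pi.single_nonneg.2 hε)
  have hloss : (Pi.single j (Pi.single k ε) : ι → κ → α) a b ≤ R a b := by
    simp only [Pi.single_apply, ite_apply, Pi.zero_apply]
    split_ifs with haj hbk
    · exact haj ▸ hbk ▸ hεR
    · exact hR a b
    · exact hR a b
  exact sub_nonneg.2 (hloss.trans (le_add_of_nonneg_right (hgain a b)))

end Transfer

section RateAllocation

variable {N K : ℕ} {B : Set (Fin N)} {π : Fin N → Fin K → Bool} {ρ : Fin K → ℝ}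
  {φ : Fin N → ℝ} {R : Fin N → Fin K → ℝ} {i j : Fin N} {k : Fin K} {ε : ℝ}

theorem IsRateAlloc.eligible_of_pos (hR : IsRateAlloc B π ρ R) (hik : 0 < R i k) :
    π i k = true :=
  Bool.eq_true_of_not_eq_false fun hπ => hik.ne' (hR.2.2.1 i k hπ)

protected theorem IsRateAlloc.transferRate (hR : IsRateAlloc B π ρ R) (hi : i ∈ B)
    (hπ : π i k = true) (hε : 0 ≤ ε) (hεR : ε ≤ R j k) :
    IsRateAlloc B π ρ (transferRate R j i k ε) := by
  obtain ⟨hnonneg, hbacklogged, heligible, hwork⟩ := hR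
  have hnonneg' := transferRate_nonneg (i := i) hnonneg hε hεR
  have hzero {a : Fin N} {b : Fin K} (hab : a = i → b ≠ k) (hR : R a b = 0) :
      transferRate R j i k ε a b = 0 :=
    ((transferRate_le_of_imp_ne hε hab).trans_eq hR).antisymm (hnonneg' a b)
  refine ⟨hnonneg', fun a b ha => ?_, fun a b hab => ?_, fun b hb => ?_⟩
  · exact hzero (fun hai => absurd (hai ▸ hi) ha) (hbacklogged a b ha)
  · refine hzero ?_ (heligible a b hab)
    rintro rfl rfl
    exact Bool.false_ne_true (hab.symm.trans hπ)
  · exact (sum_users_transferRate R j i k ε b).trans (hwork b hb)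

theorem totalRate_transferRate_of_ne (hij : i ≠ j) :
    totalRate (transferRate R j i k ε) i = totalRate R i + ε := by
  simp [totalRate, sum_servers_transferRate, hij]

theorem totalRate_le_totalRate_transferRate (hε : 0 ≤ ε) {l : Fin N} (hl : l ≠ j) :
    totalRate R l ≤ totalRate (transferRate R j i k ε) l := by
  have hgain : 0 ≤ (Pi.single i ε : Fin N → ℝ) := Pi.single_nonneg.2 hε
  simpa [totalRate, sum_servers_transferRate, hl] using hgain l

theorem CM4Fair.totalRate_div_le_of_pos (hφ : ∀ i, 0 < φ i) (hfair : CM4Fair B π ρ φ R)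
    (hi : i ∈ B) (hπ : π i k = true) (hjk : 0 < R j k) :
    totalRate R j / φ j ≤ totalRate R i / φ i := by
  by_contra! hlt
  have hij : i ≠ j := by
    rintro rfl
    exact hlt.false
  have hgain : totalRate R i / φ i < totalRate (transferRate R j i k (R j k)) i / φ i := by
    rw [totalRate_transferRate_of_ne hij]
    exact div_lt_div_of_pos_right (lt_add_of_pos_right _ hjk) (hφ i)
  obtain ⟨l, hli, hloss⟩ := hfair.2 _ (hfair.1.transferRate hi hπ hjk.le le_rfl) i hgain
  have hlj : l = j := by
    by_contra hne
    exact hloss.not_ge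
      (div_le_div_of_nonneg_right (totalRate_le_totalRate_transferRate hjk.le hne) (hφ l).le)
  exact hlt.not_ge (hlj ▸ hli)

end RateAllocation

/-- If two backlogged users both receive positive service from the same
server under a CM4-fair allocation, their normalized total rates coincide. -/
theorem cm4fair_same_server_same_rate {N K : ℕ} (hN : 0 < N) (hK : 0 < K)
    (B : Set (Fin N)) (π : Fin N → Fin K → Bool) (ρ : Fin K → ℝ) (φ : Fin N → ℝ)
    (hφ : ∀ i, 0 < φ i) (hρ : ∀ k, 0 ≤ ρ k)
    (hrow : ∀ i, ∃ k, π i k = true) (hcol : ∀ k, ∃ i, π i k = true)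
    (R : Fin N → Fin K → ℝ) (hfair : CM4Fair B π ρ φ R)
    (i j : Fin N) (hi : i ∈ B) (hj : j ∈ B) (k : Fin K)
    (hik : 0 < R i k) (hjk : 0 < R j k) :
    totalRate R i / φ i = totalRate R j / φ j :=
  le_antisymm
    (hfair.totalRate_div_le_of_pos hφ hj (hfair.1.eligible_of_pos hjk) hik)
    (hfair.totalRate_div_le_of_pos hφ hi (hfair.1.eligible_of_pos hik) hjk)
end

section
/- Let {(I_m, S_m)}_{m=1}^{M} be an FOC for a CM4-fair rate allocation matrix R and let C = (I, S) = (I_m, S_m) be a cluster with cluster rate r^C > 0. Let Ŝ ⊆ S, let Î = {i ∈ I : π_{i,k} = 1 for some k ∈ Ŝ}, and set Ī = I \ Î and S̄ = S \ Ŝ. If Ī is nonempty, then Σ_{k ∈ S̄} ρ_k ≥ r^C · Σ_{i ∈ Ī} φ_i. -/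
open Finset

/-- A Fairness Oriented Clustering (FOC) for a rate allocation matrix `R`:
a partition of users into `M` nonempty classes and of servers into `M`
pairwise disjoint classes, with a common normalized rate per cluster,
distinct cluster rates, and the server-membership characterization. -/
structure IsFOC {N K M : ℕ} (π : Fin N → Fin K → Bool) (φ : Fin N → ℝ)
    (R : Fin N → Fin K → ℝ)
    (I : Fin M → Finset (Fin N)) (S : Fin M → Finset (Fin K))
    (rC : Fin M → ℝ) : Prop where
  I_nonempty : ∀ m, (I m).Nonempty
  I_disjoint : ∀ m l, m ≠ l → Disjoint (I m) (I l)
  I_cover : ∀ i, ∃ m, i ∈ I m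
  S_disjoint : ∀ m l, m ≠ l → Disjoint (S m) (S l)
  S_cover : ∀ k, ∃ m, k ∈ S m
  rate_eq : ∀ m, ∀ i ∈ I m, totalRate R i / φ i = rC m
  rate_ne : ∀ m l, m ≠ l → rC m ≠ rC l
  server_iff : ∀ m k, (k ∈ S m ∧ 0 < rC m) ↔ ∃ i ∈ I m, 0 < R i k

/-! Users of a cluster that are not eligible for any server of `Shat` draw their whole rate from
`S \ Shat`. Every server of `S` serves somebody, so its allocated rates add up to its capacity, and
exchanging the order of summation bounds the total rate of these users by the capacity of
`S \ Shat`. -/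

namespace IsRateAlloc

variable {N K : ℕ} {B : Set (Fin N)} {π : Fin N → Fin K → Bool} {ρ : Fin K → ℝ}
  {R : Fin N → Fin K → ℝ}

theorem eligible_of_pos_s7 (hR : IsRateAlloc B π ρ R) {i : Fin N} {k : Fin K} (hik : 0 < R i k) :
    π i k = true := by
  obtain ⟨-, -, zero_of_ineligible, -⟩ := hR
  exact Bool.eq_true_of_not_eq_false fun h => hik.ne' (zero_of_ineligible i k h)

theorem sum_eq_capacity_of_pos (hR : IsRateAlloc B π ρ R) {i : Fin N} {k : Fin K}
    (hik : 0 < R i k) : ∑ j, R j k = ρ k := by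
  have eligible := hR.eligible_of_pos_s7 hik
  obtain ⟨-, zero_of_not_backlogged, -, work_conserving⟩ := hR
  have backlogged : i ∈ B := by_contra fun h => hik.ne' (zero_of_not_backlogged i k h)
  exact work_conserving k ⟨i, backlogged, eligible⟩

theorem totalRate_eq_sum_of_pos_imp_mem (hR : IsRateAlloc B π ρ R) {i : Fin N}
    {T : Finset (Fin K)} (hT : ∀ k, 0 < R i k → k ∈ T) : totalRate R i = ∑ k ∈ T, R i k :=
  (sum_subset (subset_univ T) fun k _ hk =>
    ((hR.1 i k).eq_of_not_lt (mt (hT k) hk)).symm).symm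

theorem sum_totalRate_le_sum_capacity (hR : IsRateAlloc B π ρ R) {J : Finset (Fin N)}
    {T : Finset (Fin K)} (hJT : ∀ i ∈ J, ∀ k, 0 < R i k → k ∈ T)
    (hbusy : ∀ k ∈ T, ∃ i, 0 < R i k) : ∑ i ∈ J, totalRate R i ≤ ∑ k ∈ T, ρ k :=
  calc ∑ i ∈ J, totalRate R i
      = ∑ i ∈ J, ∑ k ∈ T, R i k :=
        sum_congr rfl fun i hi => hR.totalRate_eq_sum_of_pos_imp_mem (hJT i hi)
    _ = ∑ k ∈ T, ∑ i ∈ J, R i k := sum_comm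
    _ ≤ ∑ k ∈ T, ∑ i, R i k :=
        sum_le_sum fun k _ => sum_le_univ_sum_of_nonneg fun i => hR.1 i k
    _ = ∑ k ∈ T, ρ k := sum_congr rfl fun k hk =>
        let ⟨_, hik⟩ := hbusy k hk
        hR.sum_eq_capacity_of_pos hik

end IsRateAlloc

theorem foc_subcluster_capacity_lower_general {N K : ℕ} {B : Set (Fin N)}
    {π : Fin N → Fin K → Bool} {ρ : Fin K → ℝ} {φ : Fin N → ℝ} {R : Fin N → Fin K → ℝ}
    (hR : IsRateAlloc B π ρ R) {I : Finset (Fin N)} {S : Finset (Fin K)} {r : ℝ} (hr : r ≠ 0)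
    (hrate : ∀ i ∈ I, totalRate R i / φ i = r) (hserver : ∀ k, k ∈ S ↔ ∃ i ∈ I, 0 < R i k)
    (Shat : Finset (Fin K)) :
    r * ∑ i ∈ I with ∀ k ∈ Shat, π i k = false, φ i ≤ ∑ k ∈ S \ Shat, ρ k := by
  have rate_mul_weight : ∀ i ∈ I, r * φ i = totalRate R i := fun i hi =>
    have weight_ne_zero : φ i ≠ 0 := (div_ne_zero_iff.1 ((hrate i hi).trans_ne hr)).2
    ((div_eq_iff weight_ne_zero).1 (hrate i hi)).symm
  rw [mul_sum, sum_congr rfl fun i hi => rate_mul_weight i (mem_filter.1 hi).1]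
  refine hR.sum_totalRate_le_sum_capacity (fun i hi k hik => ?_) fun k hk => ?_
  · obtain ⟨hiI, ineligible⟩ := mem_filter.1 hi
    exact mem_sdiff.2 ⟨(hserver k).2 ⟨i, hiI, hik⟩, fun hk =>
      Bool.false_ne_true ((ineligible k hk).symm.trans (hR.eligible_of_pos_s7 hik))⟩
  · obtain ⟨i, -, hik⟩ := (hserver k).1 (mem_sdiff.1 hk).1
    exact ⟨i, hik⟩

/-- In a cluster `C = (I m, S m)` of an FOC with positive cluster rate, for
any subset `Shat` of the cluster's servers, the users `Ibar` of the cluster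
not eligible to any server of `Shat` can be sustained by the remaining
servers: `Σ_{k ∈ S m \ Shat} ρ_k ≥ r^C · Σ_{i ∈ Ibar} φ_i`. -/
theorem foc_subcluster_capacity_lower {N K M : ℕ} (hN : 0 < N) (hK : 0 < K)
    (B : Set (Fin N)) (π : Fin N → Fin K → Bool) (ρ : Fin K → ℝ) (φ : Fin N → ℝ)
    (hφ : ∀ i, 0 < φ i) (hρ : ∀ k, 0 ≤ ρ k)
    (hrow : ∀ i, ∃ k, π i k = true) (hcol : ∀ k, ∃ i, π i k = true)
    (R : Fin N → Fin K → ℝ) (hfair : CM4Fair B π ρ φ R)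
    (I : Fin M → Finset (Fin N)) (S : Fin M → Finset (Fin K)) (rC : Fin M → ℝ)
    (hfoc : IsFOC π φ R I S rC)
    (m : Fin M) (hr : 0 < rC m)
    (Shat : Finset (Fin K)) (hShat : Shat ⊆ S m)
    (Ihat Ibar : Finset (Fin N))
    (hIhat : ∀ i, i ∈ Ihat ↔ i ∈ I m ∧ ∃ k ∈ Shat, π i k = true)
    (hIbar : Ibar = I m \ Ihat)
    (hne : Ibar.Nonempty) :
    rC m * ∑ i ∈ Ibar, φ i ≤ ∑ k ∈ S m \ Shat, ρ k := by
  have Ibar_eq : Ibar = {i ∈ I m | ∀ k ∈ Shat, π i k = false} := by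
    ext i; simp +contextual [hIbar, hIhat]
  exact Ibar_eq ▸ foc_subcluster_capacity_lower_general hfair.1 hr.ne' (hfoc.rate_eq m)
    (by simpa only [hr, and_true] using hfoc.server_iff m) Shat
end

section
/- Let Ĩ be a nonempty finite index set with |Ĩ| = n, let φ_i > 0 for i ∈ Ĩ, let L ≥ 0, and let F_i^0, F_i^1 (i ∈ Ĩ) and V^0, V^1 be real numbers satisfying: F_{i*}^0 = V^0 for some i* ∈ Ĩ; F_i^1 ≥ V^1 for all i ∈ Ĩ; and F_i^0 ≤ V^0 + L/φ_i for all i ∈ Ĩ. Define W_i = φ_i (F_i^1 − F_i^0). Then (Σ_{i∈Ĩ} φ_i)(V^1 − V^0) ≤ Σ_{i∈Ĩ} W_i + (n − 1)·L. Moreover, if additionally Σ_{i∈Ĩ} W_i ≤ P + L for a real number P, then (Σ_{i∈Ĩ} φ_i)(V^1 − V^0) ≤ P + n·L. -/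
open Finset

/-!
While the work level rises from `V0` to `V1`, a user whose tag starts at `V0` is allocated at least
`φ i * (V1 - V0)`. Any other user may start ahead of the work level by up to one packet, and so
falls short of that amount by at most `L`; hence the total shortfall is at most `(n - 1) * L`.
-/

theorem sum_le_sum_add_card_sub_one_nsmul {ι M : Type*} [AddCommMonoid M] [PartialOrder M]
    [IsOrderedAddMonoid M] {s : Finset ι} {f g : ι → M} {c : M} {j : ι} (hj : j ∈ s)
    (hfgj : f j ≤ g j) (hfg : ∀ i ∈ s, f i ≤ g i + c) :
    ∑ i ∈ s, f i ≤ ∑ i ∈ s, g i + (#s - 1) • c := by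
  classical
  calc
    ∑ i ∈ s, f i = f j + ∑ i ∈ s.erase j, f i := (add_sum_erase s f hj).symm
    _ ≤ g j + ∑ i ∈ s.erase j, (g i + c) :=
      add_le_add hfgj (sum_le_sum fun i hi ↦ hfg i (mem_of_mem_erase hi))
    _ = ∑ i ∈ s, g i + (#s - 1) • c := by
      rw [sum_add_distrib, sum_const, card_erase_of_mem hj, ← add_assoc, add_sum_erase s g hj]

section OrderedRing

variable {R : Type*} [Ring R] [PartialOrder R] [IsOrderedRing R]

theorem mul_sub_le_mul_sub_add_of_mul_sub_le {w x y v₀ v₁ c : R} (hw : 0 ≤ w) (hy : v₁ ≤ y)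
    (hx : w * (x - v₀) ≤ c) : w * (v₁ - v₀) ≤ w * (y - x) + c :=
  calc
    w * (v₁ - v₀) ≤ w * (y - v₀) := by gcongr
    _ = w * (y - x) + w * (x - v₀) := by rw [← mul_add, sub_add_sub_cancel]
    _ ≤ w * (y - x) + c := by gcongr

theorem single_server_work_level_upper_general {ι : Type*} (I : Finset ι) (φ F0 F1 : ι → R)
    (V0 V1 L : R) (hφ : ∀ i ∈ I, 0 ≤ φ i) (hmin : ∃ i ∈ I, F0 i = V0)
    (h1 : ∀ i ∈ I, V1 ≤ F1 i) (h0 : ∀ i ∈ I, φ i * (F0 i - V0) ≤ L)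
    (W : ι → R) (hW : ∀ i ∈ I, W i = φ i * (F1 i - F0 i)) :
    (∑ i ∈ I, φ i) * (V1 - V0) ≤ (∑ i ∈ I, W i) + ((#I : R) - 1) * L ∧
    ∀ P : R, (∑ i ∈ I, W i) ≤ P + L →
      (∑ i ∈ I, φ i) * (V1 - V0) ≤ P + (#I : R) * L := by
  obtain ⟨j, hj, hjV⟩ := hmin
  have le_work_of_min : φ j * (V1 - V0) ≤ W j := by
    rw [hW j hj, hjV]
    exact mul_le_mul_of_nonneg_left (sub_le_sub_right (h1 j hj) V0) (hφ j hj)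
  have le_work_add_packet (i) (hi : i ∈ I) : φ i * (V1 - V0) ≤ W i + L := by
    rw [hW i hi]
    exact mul_sub_le_mul_sub_add_of_mul_sub_le (hφ i hi) (h1 i hi) (h0 i hi)
  have le_total_work : (∑ i ∈ I, φ i) * (V1 - V0) ≤ (∑ i ∈ I, W i) + ((#I : R) - 1) * L := by
    rw [sum_mul, ← Nat.cast_pred (card_pos.2 ⟨j, hj⟩), ← nsmul_eq_mul]
    exact sum_le_sum_add_card_sub_one_nsmul hj le_work_of_min le_work_add_packet
  refine ⟨le_total_work, fun P hP ↦ ?_⟩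
  calc
    (∑ i ∈ I, φ i) * (V1 - V0) ≤ (∑ i ∈ I, W i) + ((#I : R) - 1) * L := le_total_work
    _ ≤ P + L + ((#I : R) - 1) * L := by gcongr
    _ = P + (#I : R) * L := by rw [sub_one_mul, add_assoc, add_sub_cancel]

end OrderedRing

/-- Algebraic core of the single-server upper bound (Lemma 8): if some tag at
time 0 equals the work level `V0`, every tag at time 1 is at least `V1`, and
every tag at time 0 is at most `V0 + L/φ_i`, then the increase of the work
level, scaled by the total weight, is at most the total allocated work plus
`(n-1)·L`; and if moreover `Σ W_i ≤ P + L`, it is at most `P + n·L`. -/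
theorem single_server_work_level_upper {α : Type*} [DecidableEq α]
    (I : Finset α) (hI : I.Nonempty)
    (φ F0 F1 : α → ℝ) (V0 V1 L : ℝ)
    (hφ : ∀ i ∈ I, 0 < φ i) (hL : 0 ≤ L)
    (hmin : ∃ i ∈ I, F0 i = V0)
    (h1 : ∀ i ∈ I, V1 ≤ F1 i)
    (h0 : ∀ i ∈ I, F0 i ≤ V0 + L / φ i)
    (W : α → ℝ) (hW : ∀ i ∈ I, W i = φ i * (F1 i - F0 i)) :
    (∑ i ∈ I, φ i) * (V1 - V0) ≤ (∑ i ∈ I, W i) + ((I.card : ℝ) - 1) * L ∧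
    ∀ P : ℝ, (∑ i ∈ I, W i) ≤ P + L →
      (∑ i ∈ I, φ i) * (V1 - V0) ≤ P + (I.card : ℝ) * L :=
  single_server_work_level_upper_general I φ F0 F1 V0 V1 L (fun i hi ↦ (hφ i hi).le) hmin h1
    (fun i hi ↦ (le_div_iff₀' (hφ i hi)).1 (sub_le_iff_le_add'.2 (h0 i hi))) W hW
end

section
/- Consider N = 4 users {a, b, c, d} and K = 2 servers with rates ρ_1 = 5/2 and ρ_2 = 1, all weights equal to 1, eligibility π_{a,1} = π_{b,1} = 1, π_{a,2} = π_{b,2} = 0, π_{c,2} = 1, π_{c,1} = 0, π_{d,1} = π_{d,2} = 1, and all four users backlogged (B = {a, b, c, d}). Then the rate allocation matrix R with r_{a,1} = r_{b,1} = 7/8, r_{d,1} = 3/4, r_{d,2} = 1/8, r_{c,2} = 7/8 and all other entries 0 is CM4-fair; consequently every CM4-fair rate allocation matrix for this instance gives every user total rate 7/8. -/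
open Finset

/-!
The total service `∑ i, totalRate R i` is the same for every allocation, so an allocation that gives
all backlogged users the same normalized rate is fair: raising one user lowers another, who was at
the same level. For uniqueness, among the users on which two fair allocations disagree choose one
with the smallest normalized rate in either of the two; the fairness of the allocation in which that
user is worse off yields a disagreement at a still smaller rate.
-/

/-- `x` max-min dominates `y`: wherever `y` improves on `x`, some coordinate that was no larger is
made smaller. A rate allocation is CM4-fair when its normalized rates dominate in this sense those
of every other allocation. -/
def MaxMinDominates {ι α : Type*} [LinearOrder α] (x y : ι → α) : Prop :=
  ∀ i, x i < y i → ∃ j, x j ≤ x i ∧ y j < x j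

theorem MaxMinDominates.antisymm {ι α : Type*} [Finite ι] [LinearOrder α] {x y : ι → α}
    (hxy : MaxMinDominates x y) (hyx : MaxMinDominates y x) : x = y := by
  by_contra hne
  obtain ⟨i, hi, hmin⟩ := Set.exists_min_image {i | x i ≠ y i} (fun i => min (x i) (y i))
    (Set.toFinite _) (Function.ne_iff.mp hne)
  wlog hlt : x i < y i generalizing x y
  · exact this hyx hxy (Ne.symm hne) hi.symm
      (fun j hj => by simpa only [min_comm] using hmin j (Ne.symm hj))
      (lt_of_le_of_ne (not_lt.mp hlt) hi.symm)
  obtain ⟨j, hji, hj⟩ := hxy i hlt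
  have hle : x i ≤ y j := by
    simpa only [min_eq_left hlt.le, min_eq_right hj.le] using hmin j hj.ne'
  exact (hle.trans_lt (hj.trans_le hji)).false

section RateAllocation

variable {N K : ℕ} {B : Set (Fin N)} {π : Fin N → Fin K → Bool} {ρ : Fin K → ℝ} {φ : Fin N → ℝ}
  {R R' : Fin N → Fin K → ℝ}

theorem IsRateAlloc.totalRate_eq_zero (hR : IsRateAlloc B π ρ R) {i : Fin N} (hi : i ∉ B) :
    totalRate R i = 0 :=
  Finset.sum_eq_zero fun k _ => hR.2.1 i k hi

theorem IsRateAlloc.sum_server_eq_zero (hR : IsRateAlloc B π ρ R) {k : Fin K}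
    (hk : ¬∃ i ∈ B, π i k = true) : ∑ i, R i k = 0 := by
  refine Finset.sum_eq_zero fun i _ => ?_
  by_cases hi : i ∈ B
  · exact hR.2.2.1 i k (Bool.eq_false_iff.mpr fun hπ => hk ⟨i, hi, hπ⟩)
  · exact hR.2.1 i k hi

theorem IsRateAlloc.sum_server_eq (hR : IsRateAlloc B π ρ R) (hR' : IsRateAlloc B π ρ R')
    (k : Fin K) : ∑ i, R i k = ∑ i, R' i k := by
  by_cases hk : ∃ i ∈ B, π i k = true
  · rw [hR.2.2.2 k hk, hR'.2.2.2 k hk]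
  · rw [hR.sum_server_eq_zero hk, hR'.sum_server_eq_zero hk]

theorem IsRateAlloc.sum_totalRate_eq (hR : IsRateAlloc B π ρ R) (hR' : IsRateAlloc B π ρ R') :
    ∑ i, totalRate R i = ∑ i, totalRate R' i :=
  calc
    ∑ i, totalRate R i = ∑ k, ∑ i, R i k := Finset.sum_comm
    _ = ∑ k, ∑ i, R' i k := Finset.sum_congr rfl fun k _ => hR.sum_server_eq hR' k
    _ = ∑ i, totalRate R' i := Finset.sum_comm

theorem IsRateAlloc.mem_of_totalRate_ne (hR : IsRateAlloc B π ρ R) (hR' : IsRateAlloc B π ρ R')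
    {i : Fin N} (hne : totalRate R i ≠ totalRate R' i) : i ∈ B := by
  by_contra hi
  exact hne ((hR.totalRate_eq_zero hi).trans (hR'.totalRate_eq_zero hi).symm)

theorem IsRateAlloc.exists_totalRate_lt (hR : IsRateAlloc B π ρ R) (hR' : IsRateAlloc B π ρ R')
    {i : Fin N} (hi : totalRate R i < totalRate R' i) : ∃ j, totalRate R' j < totalRate R j := by
  by_contra! hle
  exact (Finset.sum_lt_sum (fun j _ => hle j) ⟨i, Finset.mem_univ i, hi⟩).ne
    (hR.sum_totalRate_eq hR')

theorem IsRateAlloc.cm4Fair_of_forall_mem_div_eq (hR : IsRateAlloc B π ρ R)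
    (hφ : ∀ i ∈ B, 0 < φ i) {c : ℝ} (hc : ∀ i ∈ B, totalRate R i / φ i = c) :
    CM4Fair B π ρ φ R := by
  refine ⟨hR, fun R' hR' i hi => ?_⟩
  have hiB : i ∈ B := hR.mem_of_totalRate_ne hR' fun h => hi.ne (by rw [h])
  obtain ⟨j, hj⟩ := hR.exists_totalRate_lt hR' ((div_lt_div_iff_of_pos_right (hφ i hiB)).mp hi)
  have hjB : j ∈ B := hR.mem_of_totalRate_ne hR' hj.ne'
  exact ⟨j, ((hc j hjB).trans (hc i hiB).symm).le, div_lt_div_of_pos_right hj (hφ j hjB)⟩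

theorem CM4Fair.totalRate_div_eq (hR : CM4Fair B π ρ φ R) (hR' : CM4Fair B π ρ φ R') (i : Fin N) :
    totalRate R i / φ i = totalRate R' i / φ i :=
  have hdom : MaxMinDominates (fun i => totalRate R i / φ i) (fun i => totalRate R' i / φ i) :=
    hR.2 R' hR'.1
  congrFun (hdom.antisymm (hR'.2 R hR.1)) i

end RateAllocation

/-- The example of Fig. 4 (all four users backlogged): users `a = 0`, `b = 1`,
`c = 2`, `d = 3`; servers `1 = 0` (rate 5/2) and `2 = 1` (rate 1). Users `a`,
`b` only use server 1, user `c` only server 2, user `d` both. The allocation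
`r_{a,1} = r_{b,1} = 7/8`, `r_{d,1} = 3/4`, `r_{d,2} = 1/8`, `r_{c,2} = 7/8`
is CM4-fair, and every CM4-fair allocation gives every user total rate 7/8. -/
theorem example_four_users_all_backlogged :
    let π : Fin 4 → Fin 2 → Bool := fun i k =>
      if i.val ≤ 1 then k.val == 0 else if i.val = 2 then k.val == 1 else true
    let ρ : Fin 2 → ℝ := fun k => if k.val = 0 then 5/2 else 1
    let φ : Fin 4 → ℝ := fun _ => 1
    let B : Set (Fin 4) := Set.univ
    let R : Fin 4 → Fin 2 → ℝ := fun i k =>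
      if i.val ≤ 1 then (if k.val = 0 then 7/8 else 0)
      else if i.val = 2 then (if k.val = 1 then 7/8 else 0)
      else (if k.val = 0 then 3/4 else 1/8)
    CM4Fair B π ρ φ R ∧
      ∀ R' : Fin 4 → Fin 2 → ℝ, CM4Fair B π ρ φ R' →
        ∀ i, totalRate R' i = 7/8 := by
  intro π ρ φ B R
  have halloc : IsRateAlloc B π ρ R := by
    refine ⟨fun i k => ?_, fun i _ hi => absurd (Set.mem_univ i) hi, fun i k => ?_, fun k _ => ?_⟩
    · simp only [R]
      split_ifs <;> norm_num
    · fin_cases i <;> fin_cases k <;> simp [R, π]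
    · fin_cases k <;> norm_num [Fin.sum_univ_four, R, ρ]
  have hlevel : ∀ i, totalRate R i / φ i = 7/8 := by
    intro i
    fin_cases i <;> norm_num [totalRate, Fin.sum_univ_two, R, φ]
  have hfair : CM4Fair B π ρ φ R :=
    halloc.cm4Fair_of_forall_mem_div_eq (fun _ _ => one_pos) fun i _ => hlevel i
  refine ⟨hfair, fun R' hR' i => ?_⟩
  calc
    totalRate R' i = totalRate R' i / φ i := (div_one _).symm
    _ = totalRate R i / φ i := hR'.totalRate_div_eq hfair i
    _ = 7/8 := hlevel i
end
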